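/- Let a, b ∈ ℚ and suppose f(x) = x^12 + a·x^6 + b is irreducible over ℚ. Then the discriminant of f, expressed as the discriminant (Algebra.discr) over ℚ of the power basis 1, θ, θ^2, …, θ^11 of the field ℚ[x]/(f) generated by the image θ of x, equals 2^12 · 3^12 · b^5 · (a^2 − 4b)^6. -/

import Mathlib

open Polynomial

/-! Put `y = θ ^ m`, a root of `y ^ 2 + a * y + b`, and consider the basis `θ ^ i * y ^ u` with
`i < m` and `u < 2`. As `Tr (θ ^ k) = 0` unless `m ∣ k`, the trace form pairs the span of `θ ^ i`
and `θ ^ i * y` only with that of `θ ^ j` and `θ ^ j * y` for `j ≡ -i` modulo `m`. Up to the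
permutation `i ↦ -i`, which acts once for each `u` and so contributes the square of its sign, the
trace matrix is block diagonal with `2 × 2` blocks. The block at `i = 0` has determinant
`m ^ 2 * (a ^ 2 - 4 * b)`, and each of the remaining `m - 1` blocks carries an additional factor
`b`, the norm of `y`. -/

section PowerBasisTrace

variable {R S : Type*} [CommRing R] [CommRing S] [Algebra R S]

lemma repr_gen_pow_of_lt_dim (pb : PowerBasis R S) {k : ℕ} (hk : k < pb.dim) :
    pb.basis.repr (pb.gen ^ k) = Finsupp.single ⟨k, hk⟩ 1 := by
  rw [← pb.basis.repr_self, pb.basis_eq_pow]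

lemma trace_one_eq_dim (pb : PowerBasis R S) : Algebra.trace R S 1 = pb.dim := by
  rw [← map_one (algebraMap R S), Algebra.trace_algebraMap_of_basis pb.basis, Fintype.card_fin,
    nsmul_one]

lemma trace_gen_pow_eq_sum_repr (pb : PowerBasis R S) (k : ℕ) :
    Algebra.trace R S (pb.gen ^ k) =
      ∑ i : Fin pb.dim, pb.basis.repr (pb.gen ^ (k + (i : ℕ))) i := by
  simp only [Algebra.trace_eq_matrix_trace pb.basis, Matrix.trace, Matrix.diag_apply,
    Algebra.leftMulMatrix_eq_repr_mul, pb.basis_eq_pow, pow_add]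

lemma discr_basis_eq_discr_prod {pb : PowerBasis R S} {n m : ℕ} (hdim : pb.dim = n * m) :
    Algebra.discr R pb.basis =
      Algebra.discr R fun p : Fin n × Fin m ↦ pb.gen ^ ((p.2 : ℕ) + m * p.1) := by
  rw [← Algebra.discr_reindex R pb.basis ((finCongr hdim).trans finProdFinEquiv.symm)]
  congr 1
  funext p
  simp

end PowerBasisTrace

lemma det_submatrix_id_prodMap_id {R ι κ : Type*} [CommRing R] [Fintype ι] [DecidableEq ι]
    [Fintype κ] [DecidableEq κ] (M : Matrix (ι × κ) (ι × κ) R) (σ : Equiv.Perm κ) :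
    (M.submatrix id (Prod.map id σ)).det =
      ((Equiv.Perm.sign σ : ℤ) : R) ^ Fintype.card ι * M.det := by
  have hσ : Prod.map id σ = Equiv.prodCongrRight fun _ : ι ↦ σ := rfl
  rw [hσ, Matrix.det_permute', Equiv.Perm.sign_prodCongrRight, Finset.prod_const,
    Finset.card_univ, Units.val_pow_eq_pow_val, Int.cast_pow]

section Trinomial

variable {R S : Type*} [CommRing R] [CommRing S] [Algebra R S] {a b : R} {m : ℕ}

lemma pow_add_two_mul_of_aeval_trinomial {θ : S}
    (hθ : aeval θ (X ^ (2 * m) + C a * X ^ m + C b) = 0) (k : ℕ) :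
    θ ^ (k + 2 * m) = -(a • θ ^ (k + m) + b • θ ^ k) := by
  simp only [map_add, map_mul, map_pow, aeval_X, aeval_C] at hθ
  simp only [Algebra.smul_def, pow_add]
  linear_combination θ ^ k * hθ

lemma trace_pow_add_two_mul {θ : S}
    (hθ : aeval θ (X ^ (2 * m) + C a * X ^ m + C b) = 0) (k : ℕ) :
    Algebra.trace R S (θ ^ (k + 2 * m)) =
      -(a * Algebra.trace R S (θ ^ (k + m)) + b * Algebra.trace R S (θ ^ k)) := by
  simp only [pow_add_two_mul_of_aeval_trinomial hθ, map_neg, map_add, map_smul, smul_eq_mul]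

variable {pb : PowerBasis R S}

lemma repr_gen_pow_eq_zero_of_not_modEq [NeZero m] (hdim : pb.dim = 2 * m)
    (hθ : aeval pb.gen (X ^ (2 * m) + C a * X ^ m + C b) = 0) {i : Fin pb.dim} (k : ℕ)
    (hki : ¬ k ≡ i [MOD m]) : pb.basis.repr (pb.gen ^ k) i = 0 := by
  induction k using Nat.strong_induction_on with
  | _ k ih =>
    have hm : 0 < m := Nat.pos_of_neZero m
    rcases lt_or_ge k (2 * m) with hk | hk
    · have hne : (⟨k, hdim ▸ hk⟩ : Fin pb.dim) ≠ i := by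
        rintro rfl
        exact hki rfl
      rw [repr_gen_pow_of_lt_dim pb (hdim ▸ hk), Finsupp.single_eq_of_ne' hne]
    · obtain ⟨l, rfl⟩ := Nat.exists_eq_add_of_le' hk
      have hl : ¬ l ≡ i [MOD m] := by simpa [Nat.ModEq] using hki
      have hlm : ¬ l + m ≡ i [MOD m] := by simpa [Nat.ModEq] using hki
      simp [pow_add_two_mul_of_aeval_trinomial hθ, ih l (by omega) hl, ih (l + m) (by omega) hlm]

lemma trace_gen_pow_eq_zero_of_not_dvd [NeZero m] (hdim : pb.dim = 2 * m)
    (hθ : aeval pb.gen (X ^ (2 * m) + C a * X ^ m + C b) = 0) {k : ℕ} (hk : ¬ m ∣ k) :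
    Algebra.trace R S (pb.gen ^ k) = 0 := by
  rw [trace_gen_pow_eq_sum_repr]
  refine Finset.sum_eq_zero fun i _ ↦ repr_gen_pow_eq_zero_of_not_modEq hdim hθ _ fun hmod ↦ hk ?_
  exact (Nat.modEq_zero_iff_dvd).mp (Nat.ModEq.add_right_cancel' (i : ℕ) (by simpa using hmod))

lemma trace_gen_pow_self [NeZero m] (hdim : pb.dim = 2 * m)
    (hθ : aeval pb.gen (X ^ (2 * m) + C a * X ^ m + C b) = 0) :
    Algebra.trace R S (pb.gen ^ m) = m * -a := by
  have hm : m ≠ 0 := NeZero.ne m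
  have hdiag (i : Fin pb.dim) :
      pb.basis.repr (pb.gen ^ (m + (i : ℕ))) i = if (i : ℕ) < m then 0 else -a := by
    have hi := i.isLt
    split_ifs with him
    · rw [repr_gen_pow_of_lt_dim pb (by omega), Finsupp.single_eq_of_ne]
      simp [Fin.ext_iff, hm]
    · obtain ⟨l, hl⟩ := Nat.exists_eq_add_of_le' (not_lt.mp him)
      have hexp : m + (i : ℕ) = l + 2 * m := by omega
      rw [hexp, pow_add_two_mul_of_aeval_trinomial hθ, ← hl, map_neg, map_add, map_smul, map_smul,
        repr_gen_pow_of_lt_dim pb hi, repr_gen_pow_of_lt_dim pb (by omega : l < pb.dim)]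
      simp [Finsupp.single_apply, Fin.ext_iff, hl, hm]
  rw [trace_gen_pow_eq_sum_repr, Finset.sum_congr rfl fun i _ ↦ hdiag i,
    Fin.sum_univ_eq_sum_range (fun i ↦ if i < m then 0 else -a), hdim, two_mul,
    Finset.sum_range_add, Finset.sum_ite_of_true (by simp)]
  simp

lemma trace_gen_pow_mul_two [NeZero m] (hdim : pb.dim = 2 * m)
    (hθ : aeval pb.gen (X ^ (2 * m) + C a * X ^ m + C b) = 0) :
    Algebra.trace R S (pb.gen ^ (m * 2)) = m * (a ^ 2 - 2 * b) := by
  have hrec := trace_pow_add_two_mul hθ 0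
  rw [zero_add, zero_add, trace_gen_pow_self hdim hθ, pow_zero, trace_one_eq_dim pb, hdim] at hrec
  rw [mul_comm m 2, hrec]
  push_cast
  ring

lemma trace_gen_pow_mul_three [NeZero m] (hdim : pb.dim = 2 * m)
    (hθ : aeval pb.gen (X ^ (2 * m) + C a * X ^ m + C b) = 0) :
    Algebra.trace R S (pb.gen ^ (m * 3)) = m * (3 * a * b - a ^ 3) := by
  have hrec := trace_pow_add_two_mul hθ m
  rw [← mul_two, trace_gen_pow_mul_two hdim hθ, trace_gen_pow_self hdim hθ] at hrec
  rw [show m * 3 = m + 2 * m by ring, hrec]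
  ring

/-- The matrix of the bilinear form `(p, q) ↦ Tr (y ^ e * p * q)` in the basis `1, y` of
`R[y] / (y ^ 2 + a * y + b)`, where `e = 0` if `i = 0` and `e = 1` otherwise. Up to the factor `m`,
these are the blocks of the trace form of `R[x] / (x ^ (2 * m) + a * x ^ m + b)`. -/
def trinomialTraceBlock [NeZero m] (a b : R) (i : Fin m) : Matrix (Fin 2) (Fin 2) R :=
  if i = 0 then !![2, -a; -a, a ^ 2 - 2 * b]
  else !![-a, a ^ 2 - 2 * b; a ^ 2 - 2 * b, 3 * a * b - a ^ 3]

lemma det_trinomialTraceBlock [NeZero m] (i : Fin m) :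
    (trinomialTraceBlock a b i).det = (a ^ 2 - 4 * b) * if i = 0 then 1 else b := by
  unfold trinomialTraceBlock
  split_ifs <;> rw [Matrix.det_fin_two_of] <;> ring

lemma prod_det_smul_trinomialTraceBlock [NeZero m] :
    ∏ i : Fin m, ((m : R) • trinomialTraceBlock a b i).det =
      (m : R) ^ (2 * m) * b ^ (m - 1) * (a ^ 2 - 4 * b) ^ m := by
  have hb : ∏ i : Fin m, (if i = 0 then 1 else b) = b ^ (m - 1) := by
    simp [Finset.prod_ite, Finset.filter_ne']
  simp only [Matrix.det_smul, det_trinomialTraceBlock, Finset.prod_mul_distrib, hb,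
    Finset.prod_const, Finset.card_univ, Fintype.card_fin]
  ring

lemma trace_gen_pow_eq_smul_trinomialTraceBlock [NeZero m] (hdim : pb.dim = 2 * m)
    (hθ : aeval pb.gen (X ^ (2 * m) + C a * X ^ m + C b) = 0) (i : Fin m) (u v : Fin 2) :
    Algebra.trace R S (pb.gen ^ ((i : ℕ) + ((-i : Fin m) : ℕ) + m * (u + v))) =
      ((m : R) • trinomialTraceBlock a b i) u v := by
  have hone := trace_gen_pow_self hdim hθ
  have htwo := trace_gen_pow_mul_two hdim hθ
  unfold trinomialTraceBlock
  split_ifs with hi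
  · subst hi
    have hzero : Algebra.trace R S 1 = m * 2 := by
      rw [trace_one_eq_dim pb, hdim, Nat.cast_mul, Nat.cast_ofNat, mul_comm]
    fin_cases u <;> fin_cases v <;> simp [hzero, hone, htwo]
  · have hsum : (i : ℕ) + ((-i : Fin m) : ℕ) = m := by
      rw [Fin.val_neg, if_neg hi]
      omega
    have hthree := trace_gen_pow_mul_three hdim hθ
    rw [hsum, ← mul_one_add]
    fin_cases u <;> fin_cases v <;> simp [hone, htwo, hthree]

lemma traceMatrix_submatrix_neg_eq_blockDiagonal [NeZero m] (hdim : pb.dim = 2 * m)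
    (hθ : aeval pb.gen (X ^ (2 * m) + C a * X ^ m + C b) = 0) :
    (Algebra.traceMatrix R fun p : Fin 2 × Fin m ↦ pb.gen ^ ((p.2 : ℕ) + m * p.1)).submatrix id
        (Prod.map id (Equiv.neg (Fin m))) =
      Matrix.blockDiagonal fun i : Fin m ↦ (m : R) • trinomialTraceBlock a b i := by
  ext ⟨u, i⟩ ⟨v, j⟩
  have hexp : ((i : ℕ) + m * u) + (((-j : Fin m) : ℕ) + m * v) =
      (i : ℕ) + ((-j : Fin m) : ℕ) + m * (u + v) := by ring
  simp only [Matrix.submatrix_apply, Algebra.traceMatrix_apply, Algebra.traceForm_apply,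
    Prod.map_apply, id, Equiv.neg_apply, ← pow_add, hexp, Matrix.blockDiagonal_apply]
  split_ifs with hij
  · subst hij
    exact trace_gen_pow_eq_smul_trinomialTraceBlock hdim hθ i u v
  · refine trace_gen_pow_eq_zero_of_not_dvd hdim hθ fun hdvd ↦ hij ?_
    rw [Nat.dvd_add_left (dvd_mul_right m _)] at hdvd
    rw [← add_neg_eq_zero, Fin.ext_iff, Fin.val_add]
    exact Nat.mod_eq_zero_of_dvd hdvd

end Trinomial

theorem discr_dodecic_trinomial_general {R S : Type*} [CommRing R] [CommRing S] [Algebra R S]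
    (a b : R) (m : ℕ) [NeZero m] (pb : PowerBasis R S) (hdim : pb.dim = 2 * m)
    (hθ : aeval pb.gen (X ^ (2 * m) + C a * X ^ m + C b) = 0) :
    Algebra.discr R pb.basis = (m : R) ^ (2 * m) * b ^ (m - 1) * (a ^ 2 - 4 * b) ^ m := by
  have hsign : ((Equiv.Perm.sign (Equiv.neg (Fin m)) : ℤ) : R) ^ Fintype.card (Fin 2) = 1 := by
    rw [Fintype.card_fin, ← Int.cast_pow, ← Units.val_pow_eq_pow_val, Int.units_sq, Units.val_one,
      Int.cast_one]
  rw [discr_basis_eq_discr_prod hdim, Algebra.discr_def, ← one_mul (Matrix.det _), ← hsign,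
    ← det_submatrix_id_prodMap_id, traceMatrix_submatrix_neg_eq_blockDiagonal hdim hθ,
    Matrix.det_blockDiagonal, prod_det_smul_trinomialTraceBlock]

theorem discr_dodecic_trinomial (a b : ℚ) (f : ℚ[X])
    (hf : f = X ^ 12 + C a * X ^ 6 + C b) (hirr : Irreducible f) :
    Algebra.discr ℚ (AdjoinRoot.powerBasis hirr.ne_zero).basis =
      2 ^ 12 * 3 ^ 12 * b ^ 5 * (a ^ 2 - 4 * b) ^ 6 := by
  have hdeg : f.natDegree = 2 * 6 := by rw [hf]; compute_degree!
  have hroot : aeval (AdjoinRoot.root f) (X ^ (2 * 6) + C a * X ^ 6 + C b) = 0 := by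
    rw [← hf, AdjoinRoot.aeval_eq, AdjoinRoot.mk_self]
  rw [discr_dodecic_trinomial_general a b 6 (AdjoinRoot.powerBasis hirr.ne_zero) hdeg hroot]
  norm_num
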